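/- Suppose (u_t)_{t∈ℤ} is a strong white noise in H. Fix integers n and l with 1 ≤ l and n ≥ 2l+3, a function k : ℝ → [−1,1] and p > 0, and define U_n = n^{-1}·Σ_{t=2l+3}^n U_t with U_t = 2·Σ_{j=1}^{l} k(j/p)²·Σ_{s=l+2}^{t−l−1} ⟨u_t,u_s⟩·⟨u_{t−j},u_{s−j}⟩. Then E[U_n²] = 2·( E[⟨u₀,u₀′⟩²] )²·n^{-2}·(n−2l−2)·(n−2l−1)·Σ_{j=1}^{l} k(j/p)⁴, where u₀′ is an H-valued random element independent of u₀ with the same distribution (so that E[⟨u₀,u₀′⟩²] = ‖C(0)‖₂², the squared Hilbert–Schmidt norm of the covariance operator C(0) = E[u₀ ⊗ u₀]). -/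

import Mathlib

open MeasureTheory ProbabilityTheory Filter Finset Topology
open scoped NNReal RealInnerProductSpace

noncomputable section

variable {H : Type*} [NormedAddCommGroup H] [InnerProductSpace ℝ H]
variable {Ω : Type*} [MeasurableSpace Ω]

/-- The summand `U_{nt} = 2 Σ_{j=1}^{l} k(j/p)² Σ_{s=l+2}^{t-l-1} ⟨u_t,u_s⟩⟨u_{t-j},u_{s-j}⟩`. -/
def Umart (u : ℤ → Ω → H) (k : ℝ → ℝ) (p : ℝ) (l : ℕ) (t : ℤ) (ω : Ω) : ℝ :=
  2 * ∑ j ∈ Finset.Icc 1 l, k ((j : ℝ) / p) ^ 2 *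
    ∑ s ∈ Finset.Icc ((l : ℤ) + 2) (t - l - 1),
      ⟪u t ω, u s ω⟫ * ⟪u (t - j) ω, u (s - j) ω⟫

/-!
`U_n` is a linear combination of the products `⟪u_t, u_s⟫ ⟪u_{t-j}, u_{s-j}⟫` with
`s - j < s < t - j < t`, so each product involves four distinct times, which determine `(t, j, s)`.
Given two different products, some time therefore occurs in the first but not in the second; the
variable at that time enters linearly, is centred and is independent of all the rest, so the two
products are orthogonal in `L²`. The square of a single product integrates to `(E⟪u₀, u₁⟫²)²`
because its two factors are independent. Hence `E U_n²` is `(E⟪u₀, u₁⟫²)²` times the sum of the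
squared coefficients.
-/

section SecondMoments

variable {P : Measure Ω}

lemma integral_sq_sum_of_pairwise_orthogonal {κ : Type*} {I : Finset κ} {Y : κ → Ω → ℝ}
    (hY : ∀ i ∈ I, MemLp (Y i) 2 P)
    (horth : (I : Set κ).Pairwise fun i i' ↦ ∫ ω, Y i ω * Y i' ω ∂P = 0) :
    ∫ ω, (∑ i ∈ I, Y i ω) ^ 2 ∂P = ∑ i ∈ I, ∫ ω, Y i ω ^ 2 ∂P := by
  have hint : ∀ i ∈ I, ∀ i' ∈ I, Integrable (fun ω ↦ Y i ω * Y i' ω) P :=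
    fun i hi i' hi' ↦ (hY i hi).integrable_mul (hY i' hi')
  simp_rw [sq (Finset.sum I _), Finset.sum_mul_sum]
  rw [integral_finsetSum _ fun i hi ↦ integrable_finsetSum _ (hint i hi)]
  refine Finset.sum_congr rfl fun i hi ↦ ?_
  rw [integral_finsetSum _ (hint i hi), Finset.sum_eq_single_of_mem i hi
    fun i' hi' hne ↦ horth hi hi' hne.symm]
  simp only [sq]

lemma memLp_two_of_integrable_norm_pow [IsFiniteMeasure P] {E : Type*} [NormedAddCommGroup E]
    {X : Ω → E} (hX : AEStronglyMeasurable X P) {q : ℕ} (hq : 2 ≤ q)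
    (hint : Integrable (fun ω ↦ ‖X ω‖ ^ q) P) : MemLp X 2 P :=
  (memLp_two_iff_integrable_sq_norm hX).2 (integrable_norm_pow_of_le hX hq hint)

lemma memLp_two_mul_of_indepFun {X Y : Ω → ℝ} (hXY : IndepFun X Y P) (hX : MemLp X 2 P)
    (hY : MemLp Y 2 P) : MemLp (fun ω ↦ X ω * Y ω) 2 P := by
  refine (memLp_two_iff_integrable_sq (hX.1.mul hY.1)).2 ?_
  simpa only [Pi.mul_def, Function.comp_def, id_eq, mul_pow] using
    (hXY.comp (measurable_id.pow_const 2) (measurable_id.pow_const 2)).integrable_mul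
      hX.integrable_sq hY.integrable_sq

variable [MeasurableSpace H] [BorelSpace H]

lemma memLp_two_inner_of_indepFun {X Y : Ω → H} (hXY : IndepFun X Y P)
    (hX : MemLp X 2 P) (hY : MemLp Y 2 P) : MemLp (fun ω ↦ ⟪X ω, Y ω⟫) 2 P :=
  (memLp_two_mul_of_indepFun (hXY.comp measurable_norm measurable_norm) hX.norm hY.norm).mono
    (hX.1.inner hY.1) <| .of_forall fun _ ↦ (norm_inner_le_norm _ _).trans (le_abs_self _)

lemma integral_inner_sq_eq_of_identDistrib [SecondCountableTopology H] {ι : Type*} {u : ι → Ω → H}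
    (hindep : iIndepFun u P) (hident : ∀ i j, IdentDistrib (u i) (u j) P P) {a b c d : ι}
    (hab : a ≠ b) (hcd : c ≠ d) :
    ∫ ω, ⟪u a ω, u b ω⟫ ^ 2 ∂P = ∫ ω, ⟪u c ω, u d ω⟫ ^ 2 ∂P := by
  have := hindep.isProbabilityMeasure
  have hpair : IdentDistrib (fun ω ↦ (u a ω, u b ω)) (fun ω ↦ (u c ω, u d ω)) P P :=
    (hident a c).prodMk (hident b d) (hindep.indepFun hab) (hindep.indepFun hcd)
  exact (hpair.comp ((measurable_fst.inner measurable_snd).pow_const 2)).integral_eq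

end SecondMoments

section SigmaAlgebraOff

variable {ι α E : Type*} [MeasurableSpace E]

/-- The `σ`-algebra generated by the variables `u i` with `i ≠ a`, used to express that a random
variable does not involve `u a`. -/
@[reducible]
def sigmaAlgebraOff (u : ι → α → E) (a : ι) : MeasurableSpace α :=
  ⨆ i ∈ ({a}ᶜ : Set ι), MeasurableSpace.comap (u i) inferInstance

lemma measurable_sigmaAlgebraOff {u : ι → α → E} {a b : ι} (hb : b ≠ a) :
    Measurable[sigmaAlgebraOff u a] (u b) :=
  measurable_iff_comap_le.2 (le_iSup₂_of_le b hb le_rfl)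

lemma sigmaAlgebraOff_le {u : ι → Ω → E} (hu : ∀ i, Measurable (u i)) (a : ι) :
    sigmaAlgebraOff u a ≤ ‹MeasurableSpace Ω› :=
  iSup₂_le fun i _ ↦ (hu i).comap_le

lemma indepFun_of_measurable_sigmaAlgebraOff {F : Type*} [MeasurableSpace F] {P : Measure Ω}
    {u : ι → Ω → E} (hu : ∀ i, Measurable (u i)) (hindep : iIndepFun u P) {a : ι} {W : Ω → F}
    (hW : Measurable[sigmaAlgebraOff u a] W) : IndepFun (u a) W P := by
  have hoff := indep_iSup_of_disjoint (fun i ↦ (hu i).comap_le) hindep.iIndep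
    (disjoint_compl_right (a := ({a} : Set ι)))
  rw [IndepFun_iff_Indep]
  exact indep_of_indep_of_le_left (indep_of_indep_of_le_right hoff hW.comap_le)
    (le_iSup₂_of_le a rfl le_rfl)

end SigmaAlgebraOff

section CenteredInner

variable {P : Measure Ω}

lemma integral_inner_const_eq_zero [CompleteSpace H] {X : Ω → H} (hint : Integrable X P)
    (hmean : ∫ ω, X ω ∂P = 0) (x : H) : ∫ ω, ⟪X ω, x⟫ ∂P = 0 := by
  simp_rw [real_inner_comm x]
  rw [integral_inner hint, hmean, inner_zero_right]

variable [SecondCountableTopology H] [MeasurableSpace H] [BorelSpace H]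

lemma integral_inner_eq_zero_of_indepFun [IsFiniteMeasure P] {X W : Ω → H}
    (hX : AEMeasurable X P) (hW : AEMeasurable W P) (hXW : IndepFun X W P)
    (hcent : ∀ x, ∫ ω, ⟪X ω, x⟫ ∂P = 0) : ∫ ω, ⟪X ω, W ω⟫ ∂P = 0 := by
  have hlaw : ∫ ω, ⟪X ω, W ω⟫ ∂P = ∫ z, ⟪z.2, z.1⟫ ∂(P.map W).prod (P.map X) := by
    rw [← hXW.symm.map_prod_eq_prod_map_map hW hX, integral_map (hW.prodMk hX)]
    exact (measurable_snd.inner measurable_fst).aestronglyMeasurable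
  have hfiber (x : H) : ∫ y, ⟪y, x⟫ ∂P.map X = 0 := by
    rw [integral_map hX (by fun_prop)]
    exact hcent x
  rw [hlaw]
  by_cases hint : Integrable (fun z : H × H ↦ ⟪z.2, z.1⟫) ((P.map W).prod (P.map X))
  · rw [integral_prod _ hint]
    simp only [hfiber, integral_zero]
  · exact integral_undef hint

variable {ι : Type*} {u : ι → Ω → H}

lemma integral_inner_mul_eq_zero (hu : ∀ i, Measurable (u i)) (hindep : iIndepFun u P) {a b : ι}
    (hba : b ≠ a) (hcent : ∀ x, ∫ ω, ⟪u a ω, x⟫ ∂P = 0) {Z : Ω → ℝ}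
    (hZ : Measurable[sigmaAlgebraOff u a] Z) : ∫ ω, ⟪u a ω, u b ω⟫ * Z ω ∂P = 0 := by
  have := hindep.isProbabilityMeasure
  have hW : Measurable[sigmaAlgebraOff u a] fun ω ↦ Z ω • u b ω :=
    hZ.smul (measurable_sigmaAlgebraOff hba)
  simpa only [real_inner_smul_right, mul_comm] using
    integral_inner_eq_zero_of_indepFun (hu a).aemeasurable
      (hW.mono (sigmaAlgebraOff_le hu a) le_rfl).aemeasurable
      (indepFun_of_measurable_sigmaAlgebraOff hu hindep hW) hcent

lemma indepFun_inner_inner (hu : ∀ i, Measurable (u i)) (hindep : iIndepFun u P) {a b c d : ι}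
    (hac : a ≠ c) (had : a ≠ d) (hbc : b ≠ c) (hbd : b ≠ d) :
    IndepFun (fun ω ↦ ⟪u a ω, u b ω⟫) (fun ω ↦ ⟪u c ω, u d ω⟫) P :=
  (hindep.indepFun_prodMk_prodMk hu a b c d hac had hbc hbd).comp
    (measurable_fst.inner measurable_snd) (measurable_fst.inner measurable_snd)

end CenteredInner

section LagProduct

/-- The product `⟨u_t, u_s⟩⟨u_{t-j}, u_{s-j}⟩` occurring in `Umart`. -/
def lagProduct (u : ℤ → Ω → H) (t : ℤ) (j : ℕ) (s : ℤ) (ω : Ω) : ℝ :=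
  ⟪u t ω, u s ω⟫ * ⟪u (t - j) ω, u (s - j) ω⟫

/-- The four times at which `lagProduct u t j s` evaluates `u`. -/
def lagTimes (t : ℤ) (j : ℕ) (s : ℤ) : Finset ℤ := {t, s, t - j, s - j}

lemma exists_mem_lagTimes_notMem {t t' s s' : ℤ} {j j' : ℕ} (hj : 1 ≤ j) (hs : s < t - j)
    (hj' : 1 ≤ j') (hs' : s' < t' - j') (hne : ¬(t = t' ∧ j = j' ∧ s = s')) :
    ∃ a ∈ lagTimes t j s, a ∉ lagTimes t' j' s' := by
  by_contra! hsub
  simp only [lagTimes, Finset.mem_insert, Finset.mem_singleton, forall_eq_or_imp, forall_eq]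
    at hsub
  lia

variable [MeasurableSpace H] [BorelSpace H] [SecondCountableTopology H]

lemma measurable_lagProduct {Ω : Type*} {m : MeasurableSpace Ω} {u : ℤ → Ω → H} {t s : ℤ} {j : ℕ}
    (hu : ∀ i ∈ lagTimes t j s, Measurable (u i)) : Measurable (lagProduct u t j s) := by
  simp only [lagTimes, Finset.mem_insert, Finset.mem_singleton, forall_eq_or_imp, forall_eq] at hu
  obtain ⟨ht, hs, htj, hsj⟩ := hu
  exact (ht.inner hs).mul (htj.inner hsj)

variable {P : Measure Ω} {u : ℤ → Ω → H}

lemma integral_lagProduct_mul_eq_zero (hu : ∀ t, Measurable (u t)) (hindep : iIndepFun u P)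
    {t s : ℤ} {j : ℕ} (hj : 1 ≤ j) (hs : s < t - j) {a : ℤ} (ha : a ∈ lagTimes t j s)
    (hcent : ∀ x, ∫ ω, ⟪u a ω, x⟫ ∂P = 0) {Z : Ω → ℝ} (hZ : Measurable[sigmaAlgebraOff u a] Z) :
    ∫ ω, lagProduct u t j s ω * Z ω ∂P = 0 := by
  have factor_out {b c d : ℤ} (hb : b ≠ a) (hc : c ≠ a) (hd : d ≠ a) :
      ∫ ω, ⟪u a ω, u b ω⟫ * (⟪u c ω, u d ω⟫ * Z ω) ∂P = 0 :=
    integral_inner_mul_eq_zero hu hindep hb hcent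
      (((measurable_sigmaAlgebraOff hc).inner (measurable_sigmaAlgebraOff hd)).mul hZ)
  simp only [lagTimes, Finset.mem_insert, Finset.mem_singleton] at ha
  obtain rfl | rfl | rfl | rfl := ha
  · rw [← factor_out (b := s) (c := a - j) (d := s - j) (by lia) (by lia) (by lia)]
    simp only [lagProduct, mul_assoc]
  · rw [← factor_out (b := t) (c := t - j) (d := a - j) (by lia) (by lia) (by lia)]
    simp only [lagProduct, mul_assoc, real_inner_comm (u t _)]
  · rw [← factor_out (b := s - j) (c := t) (d := s) (by lia) (by lia) (by lia)]
    simp only [lagProduct, mul_left_comm, mul_assoc]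
  · rw [← factor_out (b := t - j) (c := t) (d := s) (by lia) (by lia) (by lia)]
    simp only [lagProduct, mul_left_comm, mul_assoc, real_inner_comm (u (t - j) _)]

lemma integral_lagProduct_mul_lagProduct_eq_zero (hu : ∀ t, Measurable (u t))
    (hindep : iIndepFun u P) (hcent : ∀ t x, ∫ ω, ⟪u t ω, x⟫ ∂P = 0) {t t' s s' : ℤ} {j j' : ℕ}
    (hj : 1 ≤ j) (hs : s < t - j) (hj' : 1 ≤ j') (hs' : s' < t' - j')
    (hne : ¬(t = t' ∧ j = j' ∧ s = s')) :
    ∫ ω, lagProduct u t j s ω * lagProduct u t' j' s' ω ∂P = 0 := by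
  obtain ⟨a, ha, ha'⟩ := exists_mem_lagTimes_notMem hj hs hj' hs' hne
  exact integral_lagProduct_mul_eq_zero hu hindep hj hs ha (hcent a) <| measurable_lagProduct
    fun i hi ↦ measurable_sigmaAlgebraOff (ne_of_mem_of_not_mem hi ha')

lemma memLp_two_lagProduct (hu : ∀ t, Measurable (u t)) (hindep : iIndepFun u P)
    (hL2 : ∀ t, MemLp (u t) 2 P) {t s : ℤ} {j : ℕ} (hj : 1 ≤ j) (hs : s < t - j) :
    MemLp (lagProduct u t j s) 2 P :=
  have memLp_inner {a b : ℤ} (hab : a ≠ b) : MemLp (fun ω ↦ ⟪u a ω, u b ω⟫) 2 P :=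
    memLp_two_inner_of_indepFun (hindep.indepFun hab) (hL2 a) (hL2 b)
  memLp_two_mul_of_indepFun
    (indepFun_inner_inner hu hindep (by lia) (by lia) (by lia) (by lia))
    (memLp_inner (by lia)) (memLp_inner (by lia))

lemma integral_lagProduct_sq (hu : ∀ t, Measurable (u t)) (hindep : iIndepFun u P)
    {t s : ℤ} {j : ℕ} (hj : 1 ≤ j) (hs : s < t - j) :
    ∫ ω, lagProduct u t j s ω ^ 2 ∂P =
      (∫ ω, ⟪u t ω, u s ω⟫ ^ 2 ∂P) * ∫ ω, ⟪u (t - j) ω, u (s - j) ω⟫ ^ 2 ∂P := by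
  have hfactors : IndepFun (fun ω ↦ ⟪u t ω, u s ω⟫) (fun ω ↦ ⟪u (t - j) ω, u (s - j) ω⟫) P :=
    indepFun_inner_inner hu hindep (by lia) (by lia) (by lia) (by lia)
  simp only [lagProduct, mul_pow]
  exact (hfactors.comp (measurable_id.pow_const 2)
    (measurable_id.pow_const 2)).integral_fun_mul_eq_mul_integral
      (((hu _).inner (hu _)).pow_const 2).aestronglyMeasurable
      (((hu _).inner (hu _)).pow_const 2).aestronglyMeasurable

theorem integral_sq_sum_mul_lagProduct (hu : ∀ t, Measurable (u t)) (hindep : iIndepFun u P)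
    (hcent : ∀ t x, ∫ ω, ⟪u t ω, x⟫ ∂P = 0) (hL2 : ∀ t, MemLp (u t) 2 P) {v : ℝ}
    (hv : Pairwise fun s t ↦ ∫ ω, ⟪u s ω, u t ω⟫ ^ 2 ∂P = v) {I : Finset (Σ _ : ℤ, ℕ × ℤ)}
    (hI : ∀ i ∈ I, 1 ≤ i.2.1 ∧ i.2.2 < i.1 - i.2.1) (c : (Σ _ : ℤ, ℕ × ℤ) → ℝ) :
    ∫ ω, (∑ i ∈ I, c i * lagProduct u i.1 i.2.1 i.2.2 ω) ^ 2 ∂P = v ^ 2 * ∑ i ∈ I, c i ^ 2 := by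
  rw [integral_sq_sum_of_pairwise_orthogonal, Finset.mul_sum]
  · refine Finset.sum_congr rfl fun i hi ↦ ?_
    obtain ⟨hj, hs⟩ := hI i hi
    simp only [mul_pow]
    rw [integral_const_mul, integral_lagProduct_sq hu hindep hj hs, hv (by lia), hv (by lia)]
    ring
  · intro i hi
    exact (memLp_two_lagProduct hu hindep hL2 (hI i hi).1 (hI i hi).2).const_mul (c i)
  · rintro ⟨t, j, s⟩ hi ⟨t', j', s'⟩ hi' hne
    obtain ⟨hj, hs⟩ := hI _ hi
    obtain ⟨hj', hs'⟩ := hI _ hi'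
    refine (integral_congr_ae (.of_forall fun ω ↦ mul_mul_mul_comm _ _ _ _)).trans ?_
    rw [integral_const_mul,
      integral_lagProduct_mul_lagProduct_eq_zero hu hindep hcent hj hs hj' hs', mul_zero]
    rintro ⟨rfl, rfl, rfl⟩
    exact hne rfl

end LagProduct

section Counting

/-- The index set of `Σ_{t=2l+3}^n U_t`: the triples `⟨t, j, s⟩` with `2l+3 ≤ t ≤ n`, `1 ≤ j ≤ l`
and `l+2 ≤ s ≤ t-l-1`. -/
def lagTriples (l n : ℕ) : Finset (Σ _ : ℤ, ℕ × ℤ) :=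
  (Finset.Icc (2 * (l : ℤ) + 3) n).sigma fun t ↦
    Finset.Icc 1 l ×ˢ Finset.Icc ((l : ℤ) + 2) (t - l - 1)

lemma one_le_and_lt_of_mem_lagTriples {l n : ℕ} {i : Σ _ : ℤ, ℕ × ℤ} (hi : i ∈ lagTriples l n) :
    1 ≤ i.2.1 ∧ i.2.2 < i.1 - i.2.1 := by
  simp only [lagTriples, Finset.mem_sigma, Finset.mem_product, Finset.mem_Icc] at hi
  lia

lemma sum_card_Icc_sub {l n : ℤ} (hn : 2 * l + 2 ≤ n) :
    ∑ t ∈ Finset.Icc (2 * l + 3) n, ((Finset.Icc (l + 2) (t - l - 1)).card : ℝ) =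
      (n - 2 * l - 2) * (n - 2 * l - 1) / 2 := by
  induction n, hn using Int.leInduction with
  | base => simp
  | succ n hn ih =>
    have hcard : ((Finset.Icc (l + 2) (n + 1 - l - 1)).card : ℝ) = n - 2 * l - 1 := by
      have hcardZ : ((Finset.Icc (l + 2) (n + 1 - l - 1)).card : ℤ) = n - 2 * l - 1 := by
        rw [Int.card_Icc]
        lia
      exact_mod_cast hcardZ
    rw [← Finset.insert_Icc_right_eq_Icc_add_one (by lia),
      Finset.sum_insert (by simp only [Finset.mem_Icc]; lia), ih, hcard]
    push_cast
    ring

lemma sum_lagTriples {l n : ℕ} (hn : 2 * l + 2 ≤ n) (f : ℕ → ℝ) :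
    ∑ i ∈ lagTriples l n, f i.2.1 =
      ((n : ℝ) - 2 * l - 2) * (n - 2 * l - 1) / 2 * ∑ j ∈ Finset.Icc 1 l, f j := by
  have hcard := sum_card_Icc_sub (l := l) (n := n) (by lia)
  push_cast at hcard
  simp only [lagTriples, Finset.sum_sigma, Finset.sum_product, Finset.sum_const, nsmul_eq_mul,
    ← Finset.mul_sum]
  rw [← Finset.sum_mul, hcard]

end Counting

theorem integral_sq_Umart_sum_general
    [SecondCountableTopology H] [MeasurableSpace H] [BorelSpace H] {P : Measure Ω}
    {u : ℤ → Ω → H} (hu : ∀ t, Measurable (u t)) (hindep : iIndepFun u P)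
    (hcent : ∀ t x, ∫ ω, ⟪u t ω, x⟫ ∂P = 0) (hL2 : ∀ t, MemLp (u t) 2 P) {v : ℝ}
    (hv : Pairwise fun s t ↦ ∫ ω, ⟪u s ω, u t ω⟫ ^ 2 ∂P = v)
    {n l : ℕ} (hn : 2 * l + 2 ≤ n) (w : ℕ → ℝ) :
    ∫ ω, ((n : ℝ)⁻¹ * ∑ t ∈ Finset.Icc (2 * (l : ℤ) + 3) (n : ℤ),
        2 * ∑ j ∈ Finset.Icc 1 l, w j *
          ∑ s ∈ Finset.Icc ((l : ℤ) + 2) (t - l - 1), lagProduct u t j s ω) ^ 2 ∂P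
      = 2 * v ^ 2 * ((n : ℝ) ^ 2)⁻¹ * ((n : ℝ) - 2 * l - 2) * ((n : ℝ) - 2 * l - 1) *
        ∑ j ∈ Finset.Icc 1 l, w j ^ 2 := by
  have hexpand (ω : Ω) : (n : ℝ)⁻¹ * ∑ t ∈ Finset.Icc (2 * (l : ℤ) + 3) (n : ℤ),
      2 * ∑ j ∈ Finset.Icc 1 l, w j *
        ∑ s ∈ Finset.Icc ((l : ℤ) + 2) (t - l - 1), lagProduct u t j s ω =
      (n : ℝ)⁻¹ * 2 * ∑ i ∈ lagTriples l n, w i.2.1 * lagProduct u i.1 i.2.1 i.2.2 ω := by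
    simp only [lagTriples, Finset.sum_sigma, Finset.sum_product, ← Finset.mul_sum, mul_assoc]
  simp only [hexpand, mul_pow]
  rw [integral_const_mul, integral_sq_sum_mul_lagProduct hu hindep hcent hL2 hv
    (fun _ ↦ one_le_and_lt_of_mem_lagTriples) fun i ↦ w i.2.1, sum_lagTriples hn fun j ↦ w j ^ 2]
  ring

/-- Equation (A.6): for a strong white noise, with `U_n = n⁻¹ Σ_{t=2l+3}^n U_t`,
`E U_n² = 2 ‖C(0)‖₂⁴ n⁻² (n-2l-2)(n-2l-1) Σ_{j=1}^{l} k(j/p)⁴`, where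
`‖C(0)‖₂² = E⟨u₀,u₀'⟩²` and the independent copy `u₀'` of `u₀` is realised by `u 1`. -/
theorem integral_sq_Umart_sum
    [CompleteSpace H] [SecondCountableTopology H] [MeasurableSpace H] [BorelSpace H]
    (P : Measure Ω) [IsProbabilityMeasure P]
    (u : ℤ → Ω → H)
    (hmeas : ∀ t, Measurable (u t))
    (hindep : iIndepFun u P)
    (hident : ∀ t, IdentDistrib (u t) (u 0) P P)
    (hint : Integrable (u 0) P)
    (hmean : ∫ ω, u 0 ω ∂P = 0)
    (hmom4 : Integrable (fun ω => ‖u 0 ω‖ ^ 4) P)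
    (n l : ℕ) (hl : 1 ≤ l) (hn : 2 * l + 3 ≤ n)
    (k : ℝ → ℝ) (hk : ∀ x, k x ∈ Set.Icc (-1 : ℝ) 1) (p : ℝ) (hp : 0 < p) :
    ∫ ω, ((n : ℝ)⁻¹ * ∑ t ∈ Finset.Icc (2 * (l : ℤ) + 3) (n : ℤ), Umart u k p l t ω) ^ 2 ∂P
      = 2 * (∫ ω, ⟪u 0 ω, u 1 ω⟫ ^ 2 ∂P) ^ 2 * ((n : ℝ) ^ 2)⁻¹ *
        ((n : ℝ) - 2 * l - 2) * ((n : ℝ) - 2 * l - 1) *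
        ∑ j ∈ Finset.Icc 1 l, k ((j : ℝ) / p) ^ 4 := by
  have hcent (t : ℤ) : ∀ x, ∫ ω, ⟪u t ω, x⟫ ∂P = 0 :=
    integral_inner_const_eq_zero ((hident t).integrable_iff.2 hint)
      ((hident t).integral_eq.trans hmean)
  have hL2 (t : ℤ) : MemLp (u t) 2 P := (hident t).memLp_iff.2 <|
    memLp_two_of_integrable_norm_pow (hmeas 0).aestronglyMeasurable (by norm_num) hmom4
  have hv : Pairwise fun s t ↦ ∫ ω, ⟪u s ω, u t ω⟫ ^ 2 ∂P = ∫ ω, ⟪u 0 ω, u 1 ω⟫ ^ 2 ∂P :=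
    fun s t hst ↦ integral_inner_sq_eq_of_identDistrib hindep
      (fun s t ↦ (hident s).trans (hident t).symm) hst zero_ne_one
  simp only [(pow_mul _ 2 2 : (_ : ℝ) ^ 4 = _)]
  exact integral_sq_Umart_sum_general hmeas hindep hcent hL2 hv (show 2 * l + 2 ≤ n by lia)
    fun j ↦ k ((j : ℝ) / p) ^ 2

end
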